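/- arXiv:2311.00955 — 3 statements merged into one kernel-verified Lean document; each statement's English description precedes it below -/
import Mathlib

section
/- Let (ρ_κ, p_κ, λ_κ, μ_κ, m_κ) be the steady state with central redshift κ supported on [0, R_κ], and set n_κ(y) = e^{μ_κ(y)}(ρ_κ(y) + p_κ(y)). Then for every continuously differentiable function ζ on [0, R_κ], defining ρ(s) := −(n_κ(s)/s²)·(d/ds)(e^{−μ_κ(s)} s³ ζ(s)) and f(s) := 4πρ(s) + 8πρ_κ(s)ζ(s) + e^{−2λ_κ(s)} λ_κ′(s) ζ′(s), one has the exact identity ∫₀^y s² f(s) ds = −(m_κ(y) + 4π p_κ(y) y³) ζ(y) for all y ∈ (0, R_κ). -/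
/-!
The function `F(s) = -(m(s) + 4π p(s) s³) ζ(s)` vanishes at `0`, so the identity is the fundamental
theorem of calculus once the integrand is recognised as `F'` on `(0, R_κ)`. There `ȳ > 0`, since
`ȳ(0) = κ > 0` and `R_κ` is the only zero of `ȳ`; hence `m' = 4π s² ρ` (`mfun_hasDerivAt`) and
`p' = (ρ + p) ȳ'`, which is the momentum equation. Since `e^{-2λ} λ' = m'/s - m/s²`
(`exp_lamfun_mul_deriv`), the integrand is
`-4π(ρ+p)(ȳ' s³ ζ + 3s² ζ + s³ ζ') + 8π s² ρ ζ + (4π s³ ρ - m) ζ'`, and this is `F'`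
(`integrand_eq`, `F_hasDerivAt`).

The fundamental theorem also needs `F'` to be integrable near the centre, where the formula for
`ȳ'` is singular. As `ȳ' ≤ 0` and `ȳ` is continuous up to `0`, monotonicity alone makes `ȳ'`
integrable (`steadyRHS_intervalIntegrable`); every other factor of `F'` is continuous.
-/

open Real MeasureTheory Set Filter

/-- Hard phase density as a function of `ȳ`: `g(ȳ) = (e^{2ȳ}+1)/2` for `ȳ ≥ 0`, `0` otherwise. -/
noncomputable def gfun (x : ℝ) : ℝ := if 0 ≤ x then (Real.exp (2*x) + 1)/2 else 0

/-- Hard phase pressure as a function of `ȳ`: `h(ȳ) = (e^{2ȳ}−1)/2` for `ȳ ≥ 0`, `0` otherwise. -/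
noncomputable def hfun (x : ℝ) : ℝ := if 0 ≤ x then (Real.exp (2*x) - 1)/2 else 0

/-- Mass function `m(r) = 4π ∫₀^r s² g(ȳ(s)) ds`. -/
noncomputable def mfun (y : ℝ → ℝ) (r : ℝ) : ℝ :=
  4 * Real.pi * ∫ s in (0:ℝ)..r, s^2 * gfun (y s)

/-- Right hand side of the steady state equation
`ȳ′(r) = −(1/(1 − 2m(r)/r)) (m(r)/r² + 4π r p(r))` with `p = h ∘ ȳ`. -/
noncomputable def steadyRHS (y : ℝ → ℝ) (r : ℝ) : ℝ :=
  -(1/(1 - 2 * mfun y r / r)) * (mfun y r / r^2 + 4 * Real.pi * r * hfun (y r))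

/-- Metric coefficient `λ_κ(r) = −(1/2) log(1 − 2m(r)/r)`. -/
noncomputable def lamfun (y : ℝ → ℝ) (r : ℝ) : ℝ :=
  -(1/2) * Real.log (1 - 2 * mfun y r / r)

/-- Metric coefficient `μ_κ(r) = ȳ_∞ − ȳ(r)`. -/
noncomputable def mufun (y : ℝ → ℝ) (yinf r : ℝ) : ℝ := yinf - y r

/-- `y` is the steady state of the hard phase model with central redshift `κ`, limit at
infinity `yinf` and support radius (unique zero) `Rk`. -/
def IsSteadyState (κ : ℝ) (y : ℝ → ℝ) (yinf Rk : ℝ) : Prop :=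
  ContinuousOn y (Set.Ici 0) ∧ y 0 = κ ∧
  (∀ r > 0, 0 < 1 - 2 * mfun y r / r ∧ HasDerivAt y (steadyRHS y r) r) ∧
  Filter.Tendsto y Filter.atTop (nhds yinf) ∧
  0 < Rk ∧ y Rk = 0 ∧ (∀ r > 0, y r = 0 → r = Rk)

/-- Number density of the steady state: `n_κ(y) = e^{μ_κ(y)}(ρ_κ(y) + p_κ(y))`. -/
noncomputable def nfun (y : ℝ → ℝ) (yinf s : ℝ) : ℝ :=
  Real.exp (mufun y yinf s) * (gfun (y s) + hfun (y s))

namespace IsSteadyState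

variable {κ : ℝ} {y : ℝ → ℝ} {yinf Rk : ℝ}

lemma pos (hκ : 0 < κ) (h : IsSteadyState κ y yinf Rk) {s : ℝ} (hs : s ∈ Ico 0 Rk) :
    0 < y s := by
  obtain ⟨hc, h0, -, -, -, -, huniq⟩ := h
  by_contra! hle
  have hmem : (0 : ℝ) ∈ Icc (y s) (y 0) := ⟨hle, by rw [h0]; exact hκ.le⟩
  obtain ⟨t, ht, hyt⟩ := intermediate_value_Icc' hs.1 (hc.mono fun x hx => hx.1) hmem
  have htpos : 0 < t := by
    rcases ht.1.eq_or_lt with rfl | h'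
    · rw [h0] at hyt; exact absurd hyt hκ.ne'
    · exact h'
  have := huniq t htpos hyt
  linarith [ht.2, hs.2]

lemma gfun_eq (hκ : 0 < κ) (h : IsSteadyState κ y yinf Rk) {s : ℝ} (hs : s ∈ Ico 0 Rk) :
    gfun (y s) = (exp (2 * y s) + 1) / 2 :=
  if_pos (h.pos hκ hs).le

lemma hfun_eq (hκ : 0 < κ) (h : IsSteadyState κ y yinf Rk) {s : ℝ} (hs : s ∈ Ico 0 Rk) :
    hfun (y s) = (exp (2 * y s) - 1) / 2 :=
  if_pos (h.pos hκ hs).le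

lemma continuousOn_Ico (h : IsSteadyState κ y yinf Rk) : ContinuousOn y (Ico 0 Rk) :=
  h.1.mono fun _ hx => hx.1

lemma continuousOn_gfun (hκ : 0 < κ) (h : IsSteadyState κ y yinf Rk) :
    ContinuousOn (fun s => gfun (y s)) (Ico 0 Rk) := by
  have hy := h.continuousOn_Ico
  have : ContinuousOn (fun s => (exp (2 * y s) + 1) / 2) (Ico 0 Rk) := by fun_prop
  exact this.congr fun s hs => h.gfun_eq hκ hs

lemma continuousOn_hfun (hκ : 0 < κ) (h : IsSteadyState κ y yinf Rk) :
    ContinuousOn (fun s => hfun (y s)) (Ico 0 Rk) := by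
  have hy := h.continuousOn_Ico
  have : ContinuousOn (fun s => (exp (2 * y s) - 1) / 2) (Ico 0 Rk) := by fun_prop
  exact this.congr fun s hs => h.hfun_eq hκ hs

lemma continuousOn_density (hκ : 0 < κ) (h : IsSteadyState κ y yinf Rk) :
    ContinuousOn (fun s => s ^ 2 * gfun (y s)) (Ico 0 Rk) :=
  (continuousOn_id.pow 2).mul (h.continuousOn_gfun hκ)

lemma density_intervalIntegrable (hκ : 0 < κ) (h : IsSteadyState κ y yinf Rk) {b : ℝ}
    (hb : b ∈ Ico 0 Rk) : IntervalIntegrable (fun s => s ^ 2 * gfun (y s)) volume 0 b :=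
  ((h.continuousOn_density hκ).mono fun x hx => by
    rw [uIcc_of_le hb.1] at hx
    exact ⟨hx.1, hx.2.trans_lt hb.2⟩).intervalIntegrable

lemma mfun_hasDerivAt (hκ : 0 < κ) (h : IsSteadyState κ y yinf Rk) {s : ℝ} (hs : s ∈ Ioo 0 Rk) :
    HasDerivAt (mfun y) (4 * π * (s ^ 2 * gfun (y s))) s := by
  have hc := (h.continuousOn_density hκ).mono Ioo_subset_Ico_self
  exact (intervalIntegral.integral_hasDerivAt_right
    (h.density_intervalIntegrable hκ ⟨hs.1.le, hs.2⟩)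
    (hc.stronglyMeasurableAtFilter isOpen_Ioo s hs)
    (hc.continuousAt (isOpen_Ioo.mem_nhds hs))).const_mul _

lemma continuousOn_mfun (hκ : 0 < κ) (h : IsSteadyState κ y yinf Rk) {b : ℝ}
    (hb : b ∈ Ico 0 Rk) : ContinuousOn (mfun y) (Icc 0 b) := by
  have := intervalIntegral.continuousOn_primitive_interval
    ((intervalIntegrable_iff_integrableOn_Icc_of_le hb.1).1 (h.density_intervalIntegrable hκ hb)
      |>.mono_set (uIcc_of_le hb.1).le)
  rw [uIcc_of_le hb.1] at this
  exact this.const_smul (4 * π)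

lemma mfun_nonneg (hκ : 0 < κ) (h : IsSteadyState κ y yinf Rk) {s : ℝ} (hs : s ∈ Ico 0 Rk) :
    0 ≤ mfun y s := by
  refine mul_nonneg (by positivity) (intervalIntegral.integral_nonneg hs.1 fun t ht => ?_)
  rw [h.gfun_eq hκ ⟨ht.1, ht.2.trans_lt hs.2⟩]
  positivity

lemma steadyRHS_nonpos (hκ : 0 < κ) (h : IsSteadyState κ y yinf Rk) {s : ℝ}
    (hs : s ∈ Ioo 0 Rk) : steadyRHS y s ≤ 0 := by
  have hs' := Ioo_subset_Ico_self hs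
  have hm := h.mfun_nonneg hκ hs'
  have hd := (h.2.2.1 s hs.1).1
  have hp : 0 ≤ hfun (y s) := by
    rw [h.hfun_eq hκ hs']
    have := Real.one_le_exp (mul_nonneg zero_le_two (h.pos hκ hs').le)
    linarith
  have hs0 : 0 < s := hs.1
  rw [steadyRHS, neg_mul, neg_nonpos]
  positivity

/-- Integrability of `ȳ'` up to the centre follows from the sign of `ȳ'` and the continuity of
`ȳ`, without any estimate on `m(r)/r²` as `r → 0`. -/
lemma steadyRHS_intervalIntegrable (hκ : 0 < κ) (h : IsSteadyState κ y yinf Rk) {b : ℝ}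
    (hb : b ∈ Ico 0 Rk) : IntervalIntegrable (steadyRHS y) volume 0 b := by
  have hneg : IntervalIntegrable (fun s => -steadyRHS y s) volume 0 b := by
    refine intervalIntegral.intervalIntegrable_deriv_of_nonneg (g := fun s => -y s) ?_ ?_ ?_
    · rw [uIcc_of_le hb.1]
      exact (h.1.mono fun x hx => hx.1).neg
    · intro s hs
      rw [min_eq_left hb.1, max_eq_right hb.1] at hs
      exact (h.2.2.1 s hs.1).2.neg
    · intro s hs
      rw [min_eq_left hb.1, max_eq_right hb.1] at hs
      exact neg_nonneg.2 (h.steadyRHS_nonpos hκ ⟨hs.1, hs.2.trans hb.2⟩)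
  simpa [Pi.neg_def] using hneg.neg

/-- The term `e^{-2λ} λ' = (m/s)' = 4π s ρ - m/s²`, multiplied by `s²`. -/
lemma exp_lamfun_mul_deriv (hκ : 0 < κ) (h : IsSteadyState κ y yinf Rk) {s : ℝ}
    (hs : s ∈ Ioo 0 Rk) :
    s ^ 2 * (exp (-2 * lamfun y s) * deriv (lamfun y) s)
      = 4 * π * s ^ 3 * gfun (y s) - mfun y s := by
  have hs0 : s ≠ 0 := hs.1.ne'
  have hd := (h.2.2.1 s hs.1).1
  have hquot := ((((h.mfun_hasDerivAt hκ hs).const_mul 2).div (hasDerivAt_id s) hs0).const_sub 1)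
  have hlam : HasDerivAt (lamfun y) _ s := (hquot.log hd.ne').const_mul (-(1 / 2))
  have hexp : exp (-2 * lamfun y s) = 1 - 2 * mfun y s / s := by
    rw [lamfun, show ∀ x : ℝ, -2 * (-(1 / 2) * x) = x by intro x; ring, exp_log hd]
  rw [hlam.deriv, hexp]
  simp only [id, Pi.div_apply]
  have hd' := hd.ne'
  generalize hD : 1 - 2 * mfun y s / s = D at hd'
  field_simp

/-- The derivative of `-(m + 4π p s³) ζ`, where `p' = (ρ + p) ȳ' = e^{2ȳ} ȳ'`. -/
noncomputable def dF (y ζ ζ' : ℝ → ℝ) (s : ℝ) : ℝ :=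
  -(4 * π * (s ^ 2 * gfun (y s)) + 4 * π * (exp (2 * y s) * steadyRHS y s) * s ^ 3
      + 12 * π * hfun (y s) * s ^ 2) * ζ s
    - (mfun y s + 4 * π * hfun (y s) * s ^ 3) * ζ' s

lemma F_hasDerivAt (hκ : 0 < κ) (h : IsSteadyState κ y yinf Rk) {ζ ζ' : ℝ → ℝ}
    (hζ : ∀ s, HasDerivAt ζ (ζ' s) s) {s : ℝ} (hs : s ∈ Ioo 0 Rk) :
    HasDerivAt (fun s => -(mfun y s + 4 * π * hfun (y s) * s ^ 3) * ζ s) (dF y ζ ζ' s) s := by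
  have hp : HasDerivAt (fun t => hfun (y t)) (exp (2 * y s) * steadyRHS y s) s := by
    have h1 : HasDerivAt (fun t => (exp (2 * y t) - 1) / 2) (exp (2 * y s) * steadyRHS y s) s := by
      refine (((((h.2.2.1 s hs.1).2.const_mul 2).exp).sub_const 1).div_const 2).congr_deriv ?_
      ring
    refine h1.congr_of_eventuallyEq ?_
    filter_upwards [isOpen_Ioo.mem_nhds hs] with t ht
    exact h.hfun_eq hκ (Ioo_subset_Ico_self ht)
  refine ((((h.mfun_hasDerivAt hκ hs).add
    ((hp.const_mul (4 * π)).mul (hasDerivAt_pow 3 s))).neg).mul (hζ s)).congr_deriv ?_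
  simp only [dF, Pi.add_apply, Pi.mul_apply, Pi.neg_apply]
  push_cast
  ring

lemma integrand_eq (hκ : 0 < κ) (h : IsSteadyState κ y yinf Rk) {ζ ζ' : ℝ → ℝ}
    (hζ : ∀ s, HasDerivAt ζ (ζ' s) s) {s : ℝ} (hs : s ∈ Ioo 0 Rk) :
    s ^ 2 *
        (4 * π * (-(nfun y yinf s / s ^ 2) *
            deriv (fun u => exp (-(mufun y yinf u)) * u ^ 3 * ζ u) s)
          + 8 * π * gfun (y s) * ζ s
          + exp (-2 * lamfun y s) * deriv (lamfun y) s * ζ' s) = dF y ζ ζ' s := by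
  have hs0 : s ≠ 0 := hs.1.ne'
  have hs' := Ioo_subset_Ico_self hs
  have hder : HasDerivAt (fun u => exp (-(mufun y yinf u)) * u ^ 3 * ζ u)
      (exp (-(mufun y yinf s)) * (steadyRHS y s * s ^ 3 * ζ s + 3 * s ^ 2 * ζ s + s ^ 3 * ζ' s))
      s := by
    have hmu : HasDerivAt (fun u => -(mufun y yinf u)) (steadyRHS y s) s := by
      exact ((h.2.2.1 s hs.1).2.const_sub yinf).neg.congr_deriv (neg_neg _)
    refine ((hmu.exp.mul (hasDerivAt_pow 3 s)).mul (hζ s)).congr_deriv ?_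
    simp only [Pi.mul_apply]
    push_cast
    ring
  have hE : exp (mufun y yinf s) * exp (-(mufun y yinf s)) = 1 := by
    rw [← exp_add, add_neg_cancel, exp_zero]
  have hρ : s ^ 2 * (4 * π * (-(nfun y yinf s / s ^ 2) *
      (exp (-(mufun y yinf s)) *
        (steadyRHS y s * s ^ 3 * ζ s + 3 * s ^ 2 * ζ s + s ^ 3 * ζ' s))))
      = -(4 * π * exp (2 * y s)) *
        (steadyRHS y s * s ^ 3 * ζ s + 3 * s ^ 2 * ζ s + s ^ 3 * ζ' s) := by
    have hn : nfun y yinf s = exp (mufun y yinf s) * exp (2 * y s) := by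
      rw [nfun, h.gfun_eq hκ hs', h.hfun_eq hκ hs']
      ring
    generalize steadyRHS y s * s ^ 3 * ζ s + 3 * s ^ 2 * ζ s + s ^ 3 * ζ' s = A
    rw [hn]
    field_simp
    linear_combination (-A) * hE
  have hlam := h.exp_lamfun_mul_deriv hκ hs
  rw [hder.deriv, mul_add, mul_add, hρ, ← mul_assoc (s ^ 2) (_ * _) (ζ' s), hlam, dF,
    h.gfun_eq hκ hs', h.hfun_eq hκ hs']
  ring

lemma dF_intervalIntegrable (hκ : 0 < κ) (h : IsSteadyState κ y yinf Rk) {ζ ζ' : ℝ → ℝ}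
    (hζ : Continuous ζ) (hζ' : Continuous ζ') {b : ℝ} (hb : b ∈ Ico 0 Rk) :
    IntervalIntegrable (dF y ζ ζ') volume 0 b := by
  have hsub : uIcc 0 b ⊆ Ico 0 Rk := fun x hx => by
    rw [uIcc_of_le hb.1] at hx
    exact ⟨hx.1, hx.2.trans_lt hb.2⟩
  have hy := h.continuousOn_Ico.mono hsub
  have hg := (h.continuousOn_gfun hκ).mono hsub
  have hh := (h.continuousOn_hfun hκ).mono hsub
  have hm : ContinuousOn (mfun y) (uIcc 0 b) := by
    rw [uIcc_of_le hb.1]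
    exact h.continuousOn_mfun hκ hb
  have hreg : ContinuousOn (fun s => -(4 * π * (s ^ 2 * gfun (y s))
      + 12 * π * hfun (y s) * s ^ 2) * ζ s
      - (mfun y s + 4 * π * hfun (y s) * s ^ 3) * ζ' s) (uIcc 0 b) := by fun_prop
  have hcoef : ContinuousOn (fun s => -(4 * π * exp (2 * y s) * s ^ 3 * ζ s)) (uIcc 0 b) := by
    fun_prop
  refine (((h.steadyRHS_intervalIntegrable hκ hb).mul_continuousOn hcoef).add
    hreg.intervalIntegrable).congr fun s _ => ?_
  simp only [dF]
  ring

end IsSteadyState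

/-- The key exact identity eliminating the nonlocal term of the linearized equation:
with `ρ(s) = −(n_κ(s)/s²)(e^{−μ_κ}s³ζ)′(s)` and
`f(s) = 4πρ(s) + 8πρ_κ(s)ζ(s) + e^{−2λ_κ(s)}λ_κ′(s)ζ′(s)`, one has
`∫₀^y s² f(s) ds = −(m_κ(y) + 4πp_κ(y)y³)ζ(y)` for `y ∈ (0, R_κ)`. -/
theorem key_integral_identity (κ : ℝ) (hκ : 0 < κ) (y : ℝ → ℝ) (yinf Rk : ℝ)
    (hss : IsSteadyState κ y yinf Rk)
    (ζ ζ' : ℝ → ℝ) (hζ : ∀ s : ℝ, HasDerivAt ζ (ζ' s) s) (hζ'c : Continuous ζ') :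
    ∀ yv ∈ Set.Ioo (0:ℝ) Rk,
      (∫ s in (0:ℝ)..yv, s^2 *
        (4 * Real.pi * (-(nfun y yinf s / s^2) *
            deriv (fun u => Real.exp (-(mufun y yinf u)) * u^3 * ζ u) s)
          + 8 * Real.pi * gfun (y s) * ζ s
          + Real.exp (-2 * lamfun y s) * deriv (lamfun y) s * ζ' s))
      = -(mfun y yv + 4 * Real.pi * hfun (y yv) * yv^3) * ζ yv := by
  intro b hb
  have hb' := Ioo_subset_Ico_self hb
  have hsub : Ioo 0 b ⊆ Ioo 0 Rk := Ioo_subset_Ioo_right hb.2.le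
  have hζc : Continuous ζ := continuous_iff_continuousAt.2 fun s => (hζ s).continuousAt
  have hcongr := intervalIntegral.integral_congr_Ioo_of_le (μ := volume) hb.1.le
    fun s hs => hss.integrand_eq hκ hζ (hsub hs)
  have hIcc : Icc 0 b ⊆ Ico 0 Rk := fun x hx => ⟨hx.1, hx.2.trans_lt hb.2⟩
  have hFc : ContinuousOn (fun s => -(mfun y s + 4 * π * hfun (y s) * s ^ 3) * ζ s)
      (Icc 0 b) := by
    have hm := hss.continuousOn_mfun hκ hb'
    have hh := (hss.continuousOn_hfun hκ).mono hIcc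
    fun_prop
  rw [hcongr, intervalIntegral.integral_eq_sub_of_hasDerivAt_of_le hb.1.le hFc
    (fun s hs => hss.F_hasDerivAt hκ hζ (hsub hs))
    (hss.dF_intervalIntegrable hκ hζc hζ'c hb')]
  simp [mfun]
end

section
/- Let L be the linearized operator of the hard phase model around the steady state with central redshift κ, and let ⟨·,·⟩ be the weighted inner product with weight e^{λ_κ−μ_κ} y³ on [0, R_κ]. Then L is symmetric with respect to the Robin boundary condition: for all χ₁, χ₂ ∈ C²([0, R_κ]) satisfying (3 − R_κ μ_κ′(R_κ))χᵢ(R_κ) + R_κ χᵢ′(R_κ) = 0 (i = 1, 2), one has ⟨Lχ₁, χ₂⟩ = ⟨Lχ₂, χ₁⟩. -/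
/-!
With `w = e^{λ-μ} s³` and `b = λ' - μ'`, the flux in the second-order part of `L` is
`e^{μ-λ} s⁻² (wχ)' = s b χ + 3χ + s χ'`, so on `(0, R)` the two integrands differ by an exact
derivative, `w (Lχ₁) χ₂ - w (Lχ₂) χ₁ = -(e^{λ-μ} s⁴ V)'` with the Wronskian `V = χ₁'χ₂ - χ₂'χ₁`;
the zeroth order coefficient cancels. The boundary term vanishes at `0` because of the factor `s⁴`
and at `R` because the Robin condition makes `(χᵢ, χᵢ')(R)` proportional.
This is `flux_symmetric`, which never needs integrability of the zeroth order term: the difference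
of the integrands is integrable, so they are both integrable or both not.

For the background, `ρ - p = 1` inside the star gives
`λ' - μ' = (4π s - 2 m / s²) / (1 - 2 m / s)`, which involves the steady state only through its
mass. Hence it is differentiable, and regularity at the center reduces to that of `m(s)/s`,
the slope at `0` of a differentiable function.
-/

open Real MeasureTheory Set Filter

/-- The zeroth order coefficient `A₁ + A₂ + A₃ + A₄ + A₅ + A₆` of the linearized operator. -/
noncomputable def Acoef (y : ℝ → ℝ) (yinf s : ℝ) : ℝ :=
  s * (deriv (deriv (lamfun y)) s - deriv (deriv (mufun y yinf)) s)
  + (deriv (lamfun y) s - deriv (mufun y yinf) s)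
  + ((deriv (lamfun y) s + deriv (mufun y yinf) s) * (deriv (mufun y yinf) s * s - 3)
      + (deriv (deriv (mufun y yinf)) s * s + deriv (mufun y yinf) s))
  - 4 * Real.pi * s * hfun (y s) * Real.exp (2 * lamfun y s) * (2 * s * deriv (mufun y yinf) s + 1)
  - ((2 * s * deriv (mufun y yinf) s + 1) / s^2) * Real.exp (2 * lamfun y s) * mfun y s
  + 8 * Real.pi * s * hfun (y s) * Real.exp (2 * lamfun y s)

/-- The linearized operator
`Lχ = −[e^{μ−λ} y⁻²(e^{λ−μ} y³ χ)′]′ + (A₁+⋯+A₆)χ` of the hard phase model. -/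
noncomputable def Lop (y : ℝ → ℝ) (yinf : ℝ) (χ : ℝ → ℝ) (s : ℝ) : ℝ :=
  -(deriv (fun t => Real.exp (mufun y yinf t - lamfun y t) / t^2 *
      deriv (fun u => Real.exp (lamfun y u - mufun y yinf u) * u^3 * χ u) t) s)
  + Acoef y yinf s * χ s

/-- The weighted inner product `⟨χ₁,χ₂⟩ = ∫₀^{R_κ} e^{λ−μ} y³ χ₁ χ₂ dy`. -/
noncomputable def ipL (y : ℝ → ℝ) (yinf Rk : ℝ) (χ₁ χ₂ : ℝ → ℝ) : ℝ :=
  ∫ s in (0:ℝ)..Rk, Real.exp (lamfun y s - mufun y yinf s) * s^3 * χ₁ s * χ₂ s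

/-- Membership in the radial Sobolev space `H¹_r`: functions of the radial variable
`y ∈ [0,R_κ]`, supported in `[0,R_κ)`, with `∫₀^{R_κ} y⁴(χ² + (χ′)²) dy < ∞`. -/
def MemH1r (Rk : ℝ) (χ : ℝ → ℝ) : Prop :=
  Function.support χ ⊆ Set.Ico 0 Rk ∧
  DifferentiableOn ℝ χ (Set.Ioo 0 Rk) ∧
  IntervalIntegrable (fun s => s^4 * ((χ s)^2 + (deriv χ s)^2)) MeasureTheory.volume 0 Rk

/-- The squared weighted norm `‖χ‖²_{y⁴ e^{3λ−3μ}}`. -/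
noncomputable def wnormSq (y : ℝ → ℝ) (yinf Rk : ℝ) (χ : ℝ → ℝ) : ℝ :=
  ∫ s in (0:ℝ)..Rk, s^4 * Real.exp (3 * lamfun y s - 3 * mufun y yinf s) * (χ s)^2

/-! ### The Lagrange identity under a Robin condition -/

/-- The Lagrange identity for `χ ↦ -[e^{-a} s⁻² (e^a s³ χ)']' + A χ` with weight `e^a s³`, where
`a' = b`, under a Robin condition at `R`. No hypothesis on `A` is needed. -/
lemma flux_symmetric {R : ℝ} (hR : 0 < R) (a b A : ℝ → ℝ)
    (ha : ∀ s ∈ Ioo 0 R, HasDerivAt a (b s) s)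
    (hb : ∀ s ∈ Ioo 0 R, DifferentiableAt ℝ b s)
    (hac : ContinuousOn a (Icc 0 R))
    (hbc : ContinuousOn (fun s => s ^ 4 * b s) (Icc 0 R))
    (f g : ℝ → ℝ) (hf : ContDiff ℝ 2 f) (hg : ContDiff ℝ 2 g) (c : ℝ)
    (hfR : c * f R + R * deriv f R = 0) (hgR : c * g R + R * deriv g R = 0) :
    (∫ s in (0:ℝ)..R, Real.exp (a s) * s ^ 3 *
      (-(deriv (fun t => Real.exp (-(a t)) / t ^ 2 *
        deriv (fun u => Real.exp (a u) * u ^ 3 * f u) t) s) + A s * f s) * g s) =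
    ∫ s in (0:ℝ)..R, Real.exp (a s) * s ^ 3 *
      (-(deriv (fun t => Real.exp (-(a t)) / t ^ 2 *
        deriv (fun u => Real.exp (a u) * u ^ 3 * g u) t) s) + A s * g s) * f s := by
  have reg : ∀ χ : ℝ → ℝ, ContDiff ℝ 2 χ → (∀ s, HasDerivAt χ (deriv χ s) s) ∧
      (∀ s, HasDerivAt (deriv χ) (deriv (deriv χ) s) s) ∧
      Continuous (deriv χ) ∧ Continuous (deriv (deriv χ)) := by
    intro χ h
    have h' : ContDiff ℝ 1 (deriv χ) := by
      have h2 : ContDiff ℝ (1 + 1) χ := by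
        have e : (1 : WithTop ℕ∞) + 1 = 2 := one_add_one_eq_two
        rw [e]; exact h
      exact (contDiff_succ_iff_deriv.1 h2).2.2
    exact ⟨fun s => (h.differentiable (by norm_num) s).hasDerivAt,
      fun s => (h'.differentiable (by norm_num) s).hasDerivAt, h'.continuous,
      h'.continuous_deriv (by norm_num)⟩
  -- The flux equals `t b χ + 3χ + t χ'` near `s`, an expression that can be differentiated.
  have flux : ∀ χ : ℝ → ℝ, ContDiff ℝ 2 χ → ∀ s ∈ Ioo 0 R,
      deriv (fun t => Real.exp (-(a t)) / t ^ 2 *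
        deriv (fun u => Real.exp (a u) * u ^ 3 * χ u) t) s =
      (b s + s * deriv b s) * χ s + s * b s * deriv χ s + 4 * deriv χ s
        + s * deriv (deriv χ) s := by
    intro χ h s hs
    obtain ⟨h1, h2, -, -⟩ := reg χ h
    have e : (fun t => Real.exp (-(a t)) / t ^ 2 *
        deriv (fun u => Real.exp (a u) * u ^ 3 * χ u) t) =ᶠ[nhds s]
        fun t => t * b t * χ t + 3 * χ t + t * deriv χ t := by
      filter_upwards [isOpen_Ioo.mem_nhds hs] with t ht
      have d := (((ha t ht).exp).mul (hasDerivAt_pow 3 t)).mul (h1 t)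
      have d' : deriv (fun u => Real.exp (a u) * u ^ 3 * χ u) t = _ := d.deriv
      rw [d']
      have ht0 : t ≠ 0 := ht.1.ne'
      have := Real.exp_pos (a t)
      rw [Real.exp_neg]
      simp only [Pi.mul_apply]
      push_cast
      field_simp
    rw [e.deriv_eq]
    have d := ((((hasDerivAt_id s).mul (hb s hs).hasDerivAt).mul (h1 s)).add
      ((h1 s).const_mul 3)).add ((hasDerivAt_id s).mul (h2 s))
    have d' : deriv (fun t => t * b t * χ t + 3 * χ t + t * deriv χ t) s = _ := d.deriv
    rw [d']
    simp only [id, Pi.mul_apply]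
    ring
  obtain ⟨f1, f2, fc1, fc2⟩ := reg f hf
  obtain ⟨g1, g2, gc1, gc2⟩ := reg g hg
  have hfc := hf.continuous
  have hgc := hg.continuous
  set V : ℝ → ℝ := fun s => deriv f s * g s - deriv g s * f s with hV
  set V' : ℝ → ℝ := fun s => deriv (deriv f) s * g s - deriv (deriv g) s * f s with hV'
  have hVd : ∀ s, HasDerivAt V (V' s) s := by
    intro s
    have d := ((f2 s).mul (g1 s)).sub ((g2 s).mul (f1 s))
    refine d.congr_deriv ?_
    simp only [hV']
    ring
  have hVc : Continuous V := by fun_prop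
  have hVc' : Continuous V' := by fun_prop
  have hVR : V R = 0 := by
    have : R * V R = 0 := by
      simp only [hV]
      linear_combination g R * hfR - f R * hgR
    exact (mul_eq_zero.1 this).resolve_left hR.ne'
  set K : ℝ → ℝ := fun s =>
    Real.exp (a s) * ((s ^ 4 * b s) * V s + 4 * s ^ 3 * V s + s ^ 4 * V' s) with hK
  have hKc : ContinuousOn K (Icc 0 R) :=
    (Real.continuous_exp.comp_continuousOn hac).mul
      (((hbc.mul hVc.continuousOn).add (by fun_prop)).add (by fun_prop))
  have hKi : IntervalIntegrable K volume 0 R := hKc.intervalIntegrable_of_Icc hR.le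
  have hK0 : ∫ s in (0:ℝ)..R, K s = 0 := by
    have := intervalIntegral.integral_eq_sub_of_hasDerivAt_of_le hR.le
      (f := fun s => Real.exp (a s) * s ^ 4 * V s) (f' := K)
      (((Real.continuous_exp.comp_continuousOn hac).mul (by fun_prop)).mul hVc.continuousOn)
      (fun s hs => by
        have d := (((ha s hs).exp).mul (hasDerivAt_pow 4 s)).mul (hVd s)
        refine d.congr_deriv ?_
        simp only [hK, Pi.mul_apply]
        push_cast
        ring) hKi
    rw [this, hVR]
    simp
  set F : ℝ → ℝ := fun s => Real.exp (a s) * s ^ 3 *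
      (-(deriv (fun t => Real.exp (-(a t)) / t ^ 2 *
        deriv (fun u => Real.exp (a u) * u ^ 3 * f u) t) s) + A s * f s) * g s with hF
  set G : ℝ → ℝ := fun s => Real.exp (a s) * s ^ 3 *
      (-(deriv (fun t => Real.exp (-(a t)) / t ^ 2 *
        deriv (fun u => Real.exp (a u) * u ^ 3 * g u) t) s) + A s * g s) * f s with hG
  have hFG : ∀ s ∈ Ioo 0 R, F s = G s - K s := by
    intro s hs
    simp only [hF, hG, hK, hV, hV']
    rw [flux f hf s hs, flux g hg s hs]
    ring
  have hae : ∀ᵐ s ∂volume.restrict (Set.uIoc (0:ℝ) R), F s = G s - K s := by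
    rw [uIoc_of_le hR.le, ← restrict_Ioo_eq_restrict_Ioc]
    exact (ae_restrict_iff' measurableSet_Ioo).2 (Filter.Eventually.of_forall hFG)
  by_cases hGi : IntervalIntegrable G volume 0 R
  · rw [intervalIntegral.integral_congr_ae_restrict hae, intervalIntegral.integral_sub hGi hKi,
      hK0, sub_zero]
  -- `F` and `G` differ by an integrable function, so here both integrals are the junk value `0`.
  · have hFi : ¬ IntervalIntegrable F volume 0 R := by
      intro h
      refine hGi ((h.add hKi).congr_ae ?_)
      filter_upwards [hae] with s hs
      simp [hs]
    rw [intervalIntegral.integral_undef hFi, intervalIntegral.integral_undef hGi]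

/-! ### Regularity of the steady state -/

/-- Positivity of `ȳ` inside the star. -/
lemma steady_pos {κ yinf Rk : ℝ} {y : ℝ → ℝ} (hκ : 0 < κ) (hss : IsSteadyState κ y yinf Rk)
    {s : ℝ} (hs : 0 ≤ s) (hsR : s < Rk) : 0 < y s := by
  obtain ⟨hc, h0, -, -, -, -, hu⟩ := hss
  by_contra! hneg
  obtain ⟨z, hz, hz0⟩ := intermediate_value_Icc' hs
    (hc.mono (fun x hx => hx.1)) (show (0:ℝ) ∈ Icc (y s) (y 0) from ⟨hneg, h0 ▸ hκ.le⟩)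
  rcases hz.1.eq_or_lt with h | h
  · rw [← h, h0] at hz0
    exact hκ.ne' hz0
  · have := hu z h hz0
    linarith [hz.2]

/-- Inside the star the mass agrees with a function differentiable on the whole line; this makes
its behaviour at the center `0` and at the jump of the density at `Rk` harmless. -/
lemma exists_mass_extension {κ yinf Rk : ℝ} {y : ℝ → ℝ} (hκ : 0 < κ)
    (hss : IsSteadyState κ y yinf Rk) :
    ∃ M : ℝ → ℝ, (∀ s ∈ Icc 0 Rk, mfun y s = M s) ∧ M 0 = 0 ∧ HasDerivAt M 0 0 ∧
      Differentiable ℝ M ∧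
      ∀ s ∈ Ioo 0 Rk, HasDerivAt M (4 * Real.pi * (s ^ 2 * ((Real.exp (2 * y s) + 1) / 2))) s := by
  have hc := hss.1
  have hyc : Continuous (fun s => y (max 0 s)) :=
    hc.comp_continuous (by fun_prop) (fun s => le_max_left 0 s)
  have hyc2 : Continuous (fun s => Real.exp (2 * y (max 0 s))) :=
    Real.continuous_exp.comp (hyc.const_mul 2)
  have hden : Continuous (fun s : ℝ => s ^ 2 * ((Real.exp (2 * y (max 0 s)) + 1) / 2)) := by
    fun_prop
  have hd : ∀ s : ℝ, HasDerivAt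
      (fun r => 4 * Real.pi * ∫ s in (0:ℝ)..r, s ^ 2 * ((Real.exp (2 * y (max 0 s)) + 1) / 2))
      (4 * Real.pi * (s ^ 2 * ((Real.exp (2 * y (max 0 s)) + 1) / 2))) s := fun s =>
    (intervalIntegral.integral_hasDerivAt_right (hden.intervalIntegrable _ _)
      hden.stronglyMeasurable.stronglyMeasurableAtFilter hden.continuousAt).const_mul _
  refine ⟨_, ?_, ?_, ?_, fun s => (hd s).differentiableAt, ?_⟩
  · intro r hr
    simp only [mfun]
    congr 1
    apply intervalIntegral.integral_congr
    intro s hs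
    rw [uIcc_of_le hr.1] at hs
    have hpos : 0 ≤ y s := by
      rcases (hs.2.trans hr.2).eq_or_lt with h | h
      · rw [h, hss.2.2.2.2.2.1]
      · exact (steady_pos hκ hss hs.1 h).le
    simp [gfun, hpos, max_eq_right hs.1]
  · simp
  · simpa using hd 0
  · intro s hs
    simpa [max_eq_right hs.1.le] using hd s

/-- Symmetry of the linearized operator `L` with respect to the weighted inner product
`⟨χ₁,χ₂⟩ = ∫₀^{R_κ} e^{λ−μ} y³ χ₁ χ₂ dy` under the Robin boundary condition
`(3 − R_κ μ_κ′(R_κ))χ(R_κ) + R_κ χ′(R_κ) = 0`. -/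
theorem linearized_operator_symmetric (κ : ℝ) (hκ : 0 < κ)
    (y : ℝ → ℝ) (yinf Rk : ℝ) (hss : IsSteadyState κ y yinf Rk)
    (χ₁ χ₂ : ℝ → ℝ) (h1 : ContDiff ℝ 2 χ₁) (h2 : ContDiff ℝ 2 χ₂)
    (hb1 : (3 - Rk * deriv (mufun y yinf) Rk) * χ₁ Rk + Rk * deriv χ₁ Rk = 0)
    (hb2 : (3 - Rk * deriv (mufun y yinf) Rk) * χ₂ Rk + Rk * deriv χ₂ Rk = 0) :
    ipL y yinf Rk (Lop y yinf χ₁) χ₂ = ipL y yinf Rk (Lop y yinf χ₂) χ₁ := by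
  obtain ⟨M, hmM, hM0, hMd0, hMd, hMs⟩ := exists_mass_extension hκ hss
  obtain ⟨hc, -, hode, -, hR, -, -⟩ := id hss
  -- `2 M(s) / s` is continuous at the center, where division by zero gives the right value `0`.
  have hq : Continuous (fun s => 2 * M s / s) := by
    have hds : Continuous (dslope M 0) := by
      rw [continuous_iff_continuousAt]
      intro s
      rcases eq_or_ne s 0 with h | h
      · subst h
        exact continuousAt_dslope_same.2 (hMd 0)
      · exact (continuousAt_dslope_of_ne h).2 (hMd s).continuousAt
    have e : (fun s => 2 * M s / s) = fun s => 2 * dslope M 0 s := by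
      funext s
      rcases eq_or_ne s 0 with h | h
      · subst h
        simp [dslope_same, hMd0.deriv]
      · rw [dslope_of_ne _ h, slope_def_field, hM0]
        simp [mul_div_assoc]
    rw [e]
    fun_prop
  have hpos : ∀ s ∈ Icc 0 Rk, 0 < 1 - 2 * M s / s := by
    intro s hs
    rcases hs.1.eq_or_lt with h | h
    · rw [← h]; simp
    · rw [← hmM s hs]; exact (hode s h).1
  have key := flux_symmetric hR (fun s => lamfun y s - mufun y yinf s)
    (fun s => (4 * Real.pi * s - 2 * M s / s ^ 2) / (1 - 2 * M s / s)) (Acoef y yinf)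
    ?_ ?_ ?_ ?_ χ₁ χ₂ h1 h2 _ hb1 hb2
  · simpa only [ipL, Lop, neg_sub] using key
  · intro s hs
    have hsI : s ∈ Icc 0 Rk := ⟨hs.1.le, hs.2.le⟩
    have hs0 : s ≠ 0 := hs.1.ne'
    have hp := hpos s hsI
    have hm : HasDerivAt (mfun y) _ s := (hMs s hs).congr_of_eventuallyEq (by
      filter_upwards [isOpen_Ioo.mem_nhds hs] with t ht
      exact hmM t ⟨ht.1.le, ht.2.le⟩)
    have hy := (hode s hs.1).2
    have hp' := (hode s hs.1).1
    have hl := ((((hm.const_mul 2).div (hasDerivAt_id s) hs0).const_sub 1).log hp'.ne').const_mul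
      (-(1/2) : ℝ)
    -- The derivative simplifies because `ρ - p = 1` where `ȳ ≥ 0`.
    have d := hl.sub (hy.const_sub yinf)
    refine d.congr_deriv ?_
    have hyp : 0 ≤ y s := (steady_pos hκ hss hs.1.le hs.2).le
    simp only [steadyRHS, hfun, if_pos hyp, hmM s hsI, id, Pi.div_apply]
    have hp2 : s - 2 * M s ≠ 0 := by
      intro h
      have : 1 - 2 * M s / s = (s - 2 * M s) / s := by field_simp
      rw [this, h] at hp
      simp at hp
    have e : 1 - 2 * M s / s = (s - 2 * M s) / s := by field_simp
    rw [e]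
    field_simp
    ring
  · intro s hs
    have hs0 : s ≠ 0 := hs.1.ne'
    have hp := (hpos s ⟨hs.1.le, hs.2.le⟩).ne'
    have := hMd s
    have d1 : DifferentiableAt ℝ (fun s => 2 * M s / s ^ 2) s :=
      (this.const_mul 2).div (by fun_prop) (pow_ne_zero 2 hs0)
    have d2 : DifferentiableAt ℝ (fun s => 2 * M s / s) s :=
      (this.const_mul 2).div differentiableAt_fun_id hs0
    exact ((differentiableAt_fun_id.const_mul _).sub d1).div (d2.const_sub 1) hp
  · have : ContinuousOn (fun s => -(1/2) * Real.log (1 - 2 * M s / s) - (yinf - y s))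
        (Icc 0 Rk) :=
      (((continuousOn_const.sub hq.continuousOn).log (fun s hs => (hpos s hs).ne')).const_mul
        _).sub (continuousOn_const.sub (hc.mono fun s hs => hs.1))
    refine this.congr fun s hs => ?_
    simp only [lamfun, mufun, hmM s hs]
  · have hMc := hMd.continuous
    have : ContinuousOn (fun s => (4 * Real.pi * s ^ 5 - 2 * s ^ 2 * M s) / (1 - 2 * M s / s))
        (Icc 0 Rk) :=
      ContinuousOn.div (by fun_prop) (continuousOn_const.sub hq.continuousOn)
        (fun s hs => (hpos s hs).ne')
    refine this.congr fun s hs => ?_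
    rcases eq_or_ne s 0 with h | h
    · subst h; simp
    · simp only [← mul_div_assoc]
      congr 1
      field_simp
end

section
/- Let R > 0, let a : [0, R] → ℝ be continuously differentiable with a(r) ≥ c₀ for some c₀ > 0 and |a′(r)| ≤ C₁ r for all r ∈ [0, R], and let φ : [0, R] → ℝ be twice continuously differentiable. Define Aφ(r) := (a(r)/r²)·(d/dr)(r² φ′(r)) = a(r)(φ″(r) + (2/r)φ′(r)). Then there is a constant C depending only on c₀, C₁ and sup_{[0,R]} a such that ∫₀^R r² |φ″(r)|² dr ≤ C (∫₀^R r² |φ′(r)|² dr + ∫₀^R r² |Aφ(r)|² dr). -/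
/-!
With `u = φ'`, expanding the square gives the pointwise identity
`(r u' + 2 u)² = r² u'² + (2 r u²)' + 2 u²`.
Integrated over `[0, R]`, the total derivative contributes the boundary term `2 R u(R)² ≥ 0`
(the one at `r = 0` vanishes because of the factor `r`, whatever `u(0)` is), so
`∫ r² u'² ≤ ∫ (r u' + 2 u)²` (`integral_sq_le_integral_radial_sq`). For `r > 0` the right-hand
integrand is `r² (φ'' + (2/r) φ')² = r² (Aφ)² / a²`, and `a ≥ c₀`.
The estimate therefore holds with `C = 1 / c₀²`; neither the lower-order term nor the
bounds on `a` and `a'` from above contribute.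
-/

open Real MeasureTheory Set

/-- The weighted estimate for the Laplacian (`a = 1`) with constant `1`, in terms of `u = φ'`. -/
lemma integral_sq_le_integral_radial_sq {R : ℝ} (hR : 0 < R) {u u' : ℝ → ℝ}
    (hu : ∀ r ∈ Set.Icc (0:ℝ) R, HasDerivAt u (u' r) r) (hu' : ContinuousOn u' (Set.Icc 0 R)) :
    (∫ r in (0:ℝ)..R, r^2 * (u' r)^2) ≤ ∫ r in (0:ℝ)..R, (r * u' r + 2 * u r)^2 := by
  have huc : ContinuousOn u (Set.Icc 0 R) := fun r hr =>
    (hu r hr).continuousAt.continuousWithinAt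
  rw [← Set.uIcc_of_le hR.le] at hu hu' huc
  have hint : IntervalIntegrable (fun r => 2 * (u r)^2 + 4 * r * u r * u' r) volume 0 R :=
    ContinuousOn.intervalIntegrable (by fun_prop)
  have hboundary : (∫ r in (0:ℝ)..R, (2 * (u r)^2 + 4 * r * u r * u' r)) = 2 * R * (u R)^2 := by
    rw [intervalIntegral.integral_eq_sub_of_hasDerivAt (f := fun r => 2 * r * (u r)^2) _ hint]
    · simp
    · intro r hr
      refine (((hasDerivAt_id r).const_mul 2).mul ((hu r hr).pow 2)).congr_deriv ?_
      simp
      ring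
  have hsq : IntervalIntegrable (fun r => (r * u' r + 2 * u r)^2) volume 0 R :=
    ContinuousOn.intervalIntegrable (by fun_prop)
  calc (∫ r in (0:ℝ)..R, r^2 * (u' r)^2)
      ≤ ∫ r in (0:ℝ)..R,
          ((r * u' r + 2 * u r)^2 - (2 * (u r)^2 + 4 * r * u r * u' r)) := by
        refine intervalIntegral.integral_mono_on hR.le
          (ContinuousOn.intervalIntegrable (by fun_prop)) (hsq.sub hint) fun r _ => ?_
        nlinarith [sq_nonneg (u r)]
    _ = (∫ r in (0:ℝ)..R, (r * u' r + 2 * u r)^2) - 2 * R * (u R)^2 := by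
        rw [intervalIntegral.integral_sub hsq hint, hboundary]
    _ ≤ _ := sub_le_self _ (by positivity)

/-- Weighted radial elliptic estimate: if `a ≥ c₀ > 0`, `a ≤ M` and `|a′(r)| ≤ C₁ r` on
`[0,R]`, then with `Aφ = a(φ″ + (2/r)φ′)` one has, with a constant `C` depending only
on `c₀`, `C₁` and `M`,
`∫₀^R r²|φ″|² dr ≤ C(∫₀^R r²|φ′|² dr + ∫₀^R r²|Aφ|² dr)`. -/
theorem radial_elliptic_estimate (c₀ : ℝ) (hc₀ : 0 < c₀) (C₁ M : ℝ) :
    ∃ C > (0:ℝ), ∀ R > (0:ℝ), ∀ a a' φ φ' φ'' : ℝ → ℝ,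
      (∀ r ∈ Set.Icc (0:ℝ) R, c₀ ≤ a r ∧ a r ≤ M ∧ |a' r| ≤ C₁ * r) →
      (∀ r ∈ Set.Icc (0:ℝ) R, HasDerivAt a (a' r) r) →
      ContinuousOn a' (Set.Icc 0 R) →
      (∀ r ∈ Set.Icc (0:ℝ) R, HasDerivAt φ (φ' r) r) →
      (∀ r ∈ Set.Icc (0:ℝ) R, HasDerivAt φ' (φ'' r) r) →
      ContinuousOn φ'' (Set.Icc 0 R) →
      (∫ r in (0:ℝ)..R, r^2 * (φ'' r)^2) ≤
        C * ((∫ r in (0:ℝ)..R, r^2 * (φ' r)^2) +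
          ∫ r in (0:ℝ)..R, r^2 * (a r * (φ'' r + (2/r) * φ' r))^2) := by
  refine ⟨1 / c₀^2, by positivity, ?_⟩
  intro R hR a a' φ φ' φ'' ha had _ _ hφ' hφ''
  have hac : ContinuousOn a (Set.Icc 0 R) := fun r hr =>
    (had r hr).continuousAt.continuousWithinAt
  have hφ'c : ContinuousOn φ' (Set.Icc 0 R) := fun r hr =>
    (hφ' r hr).continuousAt.continuousWithinAt
  -- Clearing the factor `2 / r` is legitimate off `r = 0`, and makes the integrand continuous.
  have hA : (∫ r in (0:ℝ)..R, r^2 * (a r * (φ'' r + (2/r) * φ' r))^2)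
      = ∫ r in (0:ℝ)..R, (a r)^2 * (r * φ'' r + 2 * φ' r)^2 := by
    refine intervalIntegral.integral_congr_ae (Filter.Eventually.of_forall fun r hr => ?_)
    rw [Set.uIoc_of_le hR.le] at hr
    have hr0 : r ≠ 0 := hr.1.ne'
    field_simp
  have hmono : c₀^2 * (∫ r in (0:ℝ)..R, (r * φ'' r + 2 * φ' r)^2)
      ≤ ∫ r in (0:ℝ)..R, (a r)^2 * (r * φ'' r + 2 * φ' r)^2 := by
    rw [← intervalIntegral.integral_const_mul]
    refine intervalIntegral.integral_mono_on hR.le ?_ ?_ fun r hr => ?_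
    · exact ContinuousOn.intervalIntegrable (by rw [Set.uIcc_of_le hR.le]; fun_prop)
    · exact ContinuousOn.intervalIntegrable (by rw [Set.uIcc_of_le hR.le]; fun_prop)
    · have := (ha r hr).1
      gcongr
  have hlow : 0 ≤ ∫ r in (0:ℝ)..R, r^2 * (φ' r)^2 :=
    intervalIntegral.integral_nonneg hR.le fun r _ => by positivity
  have hlap := mul_le_mul_of_nonneg_left (integral_sq_le_integral_radial_sq hR hφ' hφ'')
    (sq_nonneg c₀)
  rw [hA, one_div_mul_eq_div, le_div_iff₀ (by positivity)]
  linarith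
end
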